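/- Unilateral ABP estimates for viscosity solutions: let Ω ⊂ ℝⁿ be a bounded open set of diameter d and f continuous and bounded in Ω. There exists a constant C_n > 0 depending only on n such that: (i) if M_a is of class 𝒜_1 and u is an upper semicontinuous viscosity subsolution of M_a(D²u) = f in Ω, then sup_Ω u⁺ ≤ sup_{∂Ω} u⁺ + (C_n/a_1) d ‖f‖_{L^n(Ω)}; (ii) if M_a is of class 𝒜_n and u is a lower semicontinuous viscosity supersolution of M_a(D²u) = f in Ω, then sup_Ω u⁻ ≤ sup_{∂Ω} u⁻ + (C_n/a_n) d ‖f‖_{L^n(Ω)}. -/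

import Mathlib

open Set Metric MeasureTheory Filter

noncomputable section

/-- Euclidean `n`-space `ℝⁿ`. -/
abbrev En (n : ℕ) : Type := EuclideanSpace ℝ (Fin n)

/-- The eigenvalues of a (symmetric) matrix, arranged in nondecreasing order. -/
noncomputable def sortedEig {n : ℕ} (X : Matrix (Fin n) (Fin n) ℝ) : Fin n → ℝ :=
  if hX : X.IsHermitian then fun i => hX.eigenvalues (Tuple.sort hX.eigenvalues i) else 0

/-- The weighted partial trace operator `M_a(X) = Σ a_i λ_i(X)`. -/
noncomputable def Ma {n : ℕ} (a : Fin n → ℝ) (X : Matrix (Fin n) (Fin n) ℝ) : ℝ :=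
  ∑ i, a i * sortedEig X i

/-- The last index of `Fin n`. -/
def lastIdx (n : ℕ) [NeZero n] : Fin n :=
  ⟨n - 1, Nat.sub_lt (Nat.pos_of_ne_zero (NeZero.ne n)) Nat.one_pos⟩

/-- The class 𝒜̄ : all weights nonnegative, some weight positive. -/
def ClassAbar {n : ℕ} (a : Fin n → ℝ) : Prop := (∀ i, 0 ≤ a i) ∧ ∃ i, 0 < a i

/-- The class 𝒜 : nonnegative weights with `a 1 > 0` and `a n > 0`. -/
def ClassA {n : ℕ} [NeZero n] (a : Fin n → ℝ) : Prop :=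
  (∀ i, 0 ≤ a i) ∧ 0 < a 0 ∧ 0 < a (lastIdx n)

/-- The class 𝒜₁ : nonnegative weights with `a 1 > 0`. -/
def ClassA1 {n : ℕ} [NeZero n] (a : Fin n → ℝ) : Prop := (∀ i, 0 ≤ a i) ∧ 0 < a 0

/-- The class 𝒜ₙ : nonnegative weights with `a n > 0`. -/
def ClassAn {n : ℕ} [NeZero n] (a : Fin n → ℝ) : Prop :=
  (∀ i, 0 ≤ a i) ∧ 0 < a (lastIdx n)

/-- `a* = min (a 1) (a n)`. -/
noncomputable def aStar {n : ℕ} [NeZero n] (a : Fin n → ℝ) : ℝ := min (a 0) (a (lastIdx n))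

/-- `â_j = (a 1 + ⋯ + a n) - a j`. -/
noncomputable def hatA {n : ℕ} (a : Fin n → ℝ) (j : Fin n) : ℝ := (∑ i, a i) - a j

/-- The Hessian matrix of `φ` at `x`. -/
noncomputable def hess {n : ℕ} (φ : En n → ℝ) (x : En n) : Matrix (Fin n) (Fin n) ℝ :=
  fun i j => iteratedFDeriv ℝ 2 φ x ![EuclideanSpace.single i 1, EuclideanSpace.single j 1]

/-- The Hessian matrix of `φ` at `x`, with derivatives taken within `Ω`. -/
noncomputable def hessOn {n : ℕ} (Ω : Set (En n)) (φ : En n → ℝ) (x : En n) :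
    Matrix (Fin n) (Fin n) ℝ :=
  fun i j =>
    iteratedFDerivWithin ℝ 2 φ Ω x ![EuclideanSpace.single i 1, EuclideanSpace.single j 1]

/-- `u` is a viscosity subsolution of `M_a(D²u) = f` in `Ω`. -/
def IsViscSubsol {n : ℕ} (a : Fin n → ℝ) (Ω : Set (En n)) (f u : En n → ℝ) : Prop :=
  ∀ x₀ ∈ Ω, ∀ φ : En n → ℝ, ContDiff ℝ 2 φ →
    IsLocalMaxOn (fun x => u x - φ x) Ω x₀ → f x₀ ≤ Ma a (hess φ x₀)

/-- `u` is a viscosity supersolution of `M_a(D²u) = f` in `Ω`. -/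
def IsViscSupersol {n : ℕ} (a : Fin n → ℝ) (Ω : Set (En n)) (f u : En n → ℝ) : Prop :=
  ∀ x₀ ∈ Ω, ∀ φ : En n → ℝ, ContDiff ℝ 2 φ →
    IsLocalMinOn (fun x => u x - φ x) Ω x₀ → Ma a (hess φ x₀) ≤ f x₀

/-- `u` is a (continuous) viscosity solution of `M_a(D²u) = f` in `Ω`. -/
def IsViscSolution {n : ℕ} (a : Fin n → ℝ) (Ω : Set (En n)) (f u : En n → ℝ) : Prop :=
  ContinuousOn u Ω ∧ IsViscSubsol a Ω f u ∧ IsViscSupersol a Ω f u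

/-- The `L^p` norm of `f` on `D`. -/
noncomputable def lpNormOn {n : ℕ} (p : ℝ) (D : Set (En n)) (f : En n → ℝ) : ℝ :=
  (∫ x in D, |f x| ^ p) ^ (1 / p)

/-- The sup norm of `f` on `D`. -/
noncomputable def supAbsOn {n : ℕ} (D : Set (En n)) (f : En n → ℝ) : ℝ :=
  sSup ((fun x => |f x|) '' D)

/-- The Hölder seminorm `[h]_{β,D}`. -/
noncomputable def holderSemi {n : ℕ} (β : ℝ) (D : Set (En n)) (h : En n → ℝ) : ℝ :=
  sSup {r | ∃ x ∈ D, ∃ y ∈ D, x ≠ y ∧ r = |h x - h y| / ‖x - y‖ ^ β}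

/-- The Hölder norm `‖g‖_{C^β(D)} = sup_D |g| + [g]_{β,D}`. -/
noncomputable def cBetaNorm {n : ℕ} (β : ℝ) (D : Set (En n)) (g : En n → ℝ) : ℝ :=
  supAbsOn D g + holderSemi β D g

/-- `g` is `β`-Hölder continuous on `D`. -/
def HolderOn {n : ℕ} (β : ℝ) (D : Set (En n)) (g : En n → ℝ) : Prop :=
  ∃ K : ℝ, ∀ x ∈ D, ∀ y ∈ D, |g x - g y| ≤ K * ‖x - y‖ ^ β

/-- The `C^{1,β}(D)` norm: `sup|g| + sup|Dg| + [Dg]_{β,D}`. -/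
noncomputable def c1BetaNorm {n : ℕ} (β : ℝ) (D : Set (En n)) (g : En n → ℝ) : ℝ :=
  supAbsOn D g + sSup ((fun x => ‖fderiv ℝ g x‖) '' D) +
    sSup {r | ∃ x ∈ D, ∃ y ∈ D, x ≠ y ∧ r = ‖fderiv ℝ g x - fderiv ℝ g y‖ / ‖x - y‖ ^ β}

/-- `g ∈ C^{1,β}(D)`: differentiable with `β`-Hölder derivative on `D`. -/
def C1HolderOn {n : ℕ} (β : ℝ) (D : Set (En n)) (g : En n → ℝ) : Prop :=
  ContDiff ℝ 1 g ∧ ∃ K : ℝ, ∀ x ∈ D, ∀ y ∈ D,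
    ‖fderiv ℝ g x - fderiv ℝ g y‖ ≤ K * ‖x - y‖ ^ β

/-- Uniform exterior sphere condition with radius `R`: every boundary point lies on the
boundary of a closed ball of radius `R` containing `Ω̄`. -/
def ExtSphere {n : ℕ} (Ω : Set (En n)) (R : ℝ) : Prop :=
  ∀ y ∈ frontier Ω, ∃ z : En n, dist y z = R ∧ closure Ω ⊆ closedBall z R

/-- The cone `Σ_θ = {x : xₙ ≥ |x| cos θ}`. -/
def coneSet (n : ℕ) [NeZero n] (θ : ℝ) : Set (En n) := {x | ‖x‖ * Real.cos θ ≤ x (lastIdx n)}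

/-- Uniform exterior cone condition. -/
def ExtCone {n : ℕ} [NeZero n] (Ω : Set (En n)) : Prop :=
  ∃ θ₀ ∈ Set.Ioo (0 : ℝ) Real.pi, ∃ r₀ > (0 : ℝ), ∀ y ∈ frontier Ω,
    ∃ O : En n ≃ₗᵢ[ℝ] En n,
      closure Ω ∩ ball y r₀ ⊆ (fun x => y + O x) '' coneSet n θ₀

/-- Uniform Lipschitz boundary with Lipschitz constant `L`: near each boundary point, in
suitable rotated coordinates, `Ω` is the region above the graph of an `L`-Lipschitz
function. -/
def LipschitzBoundary {n : ℕ} [NeZero n] (Ω : Set (En n)) (L : ℝ) : Prop :=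
  ∃ r₀ > (0 : ℝ), ∀ y ∈ frontier Ω, ∃ O : En n ≃ₗᵢ[ℝ] En n, ∃ ψ : En n → ℝ,
    LipschitzWith (Real.toNNReal L) ψ ∧
    ∀ x ∈ ball (0 : En n) r₀,
      (y + O x ∈ Ω ↔ ψ (x - EuclideanSpace.single (lastIdx n) (x (lastIdx n))) < x (lastIdx n))

/-- The open cube of edge `ℓ` centered at the origin. -/
def cube (n : ℕ) (ℓ : ℝ) : Set (En n) := {x | ∀ i, |x i| < ℓ / 2}

/-- The upper concave envelope of `u` in `Ω`: the smallest concave function `≥ u` in `Ω`. -/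
noncomputable def upperEnvelope {n : ℕ} (Ω : Set (En n)) (u : En n → ℝ) : En n → ℝ :=
  fun x => sInf {t | ∃ φ : En n → ℝ, ConcaveOn ℝ Ω φ ∧ (∀ z ∈ Ω, u z ≤ φ z) ∧ t = φ x}

/-- The lower convex envelope of `u` in `Ω`: the largest convex function `≤ u` in `Ω`. -/
noncomputable def lowerEnvelope {n : ℕ} (Ω : Set (En n)) (u : En n → ℝ) : En n → ℝ :=
  fun x => sSup {t | ∃ φ : En n → ℝ, ConvexOn ℝ Ω φ ∧ (∀ z ∈ Ω, φ z ≤ u z) ∧ t = φ x}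

end

/-!
Let `u` be a subsolution with `u x₀ > sup_{∂Ω} u + m d`. For every `p` with `‖p‖ ≤ m`, the affine
function of slope `p` that touches `u` from above does so at an interior point, so the contact
slopes fill a ball of radius `m`. Testing the equation with quadratic polynomials whose Hessian is
`δ I - k e ⊗ e`, with `e` the direction of the difference of two contact slopes, shows that on small
balls of radius `r` the contact slopes oscillate by at most `C (f⁻ / a₁) r`: the weight `a₁` alone
sees the curvature `-k`. A Vitali covering then bounds the volume of the ball of slopes by
`∫ (C f⁻ / a₁)ⁿ`, with no regularity of the concave envelope and no area formula. Supersolutions are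
treated by applying the same argument to `-u`, with `aₙ` and `f⁺` in place of `a₁` and `f⁻`.
-/

section SaddleQuadratic

variable {E : Type*} [NormedAddCommGroup E] [InnerProductSpace ℝ E]

/-- The quadratic polynomial centred at `y` that vanishes there, with gradient `w` at `y` and
Hessian `δ I - k e ⊗ e`; these are the test functions of the proof. -/
noncomputable def saddleQuadratic (w e y : E) (k δ : ℝ) (x : E) : ℝ :=
  inner ℝ w (x - y) + δ / 2 * ‖x - y‖ ^ 2 - k / 2 * inner ℝ e (x - y) ^ 2

lemma saddleQuadratic_self (w e y : E) (k δ : ℝ) : saddleQuadratic w e y k δ y = 0 := by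
  simp [saddleQuadratic]

lemma neg_saddleQuadratic (w e y x : E) (k δ : ℝ) :
    -saddleQuadratic w e y k δ x = saddleQuadratic (-w) e y (-k) (-δ) x := by
  simp only [saddleQuadratic, inner_neg_left]
  ring

lemma contDiff_saddleQuadratic (w e y : E) (k δ : ℝ) {m : WithTop ℕ∞} :
    ContDiff ℝ m (saddleQuadratic w e y k δ) := by
  have hsub : ContDiff ℝ m (fun x : E => x - y) := contDiff_id.sub contDiff_const
  have hinner (v : E) : ContDiff ℝ m (fun x : E => inner ℝ v (x - y)) := contDiff_const.inner ℝ hsub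
  exact ((hinner w).add (contDiff_const.mul (hsub.norm_sq ℝ))).sub
    (contDiff_const.mul ((hinner e).pow 2))

lemma hasFDerivAt_saddleQuadratic (w e y x : E) (k δ : ℝ) :
    HasFDerivAt (saddleQuadratic w e y k δ)
      (innerSL ℝ w + δ • innerSL ℝ (x - y) - (k * inner ℝ e (x - y)) • innerSL ℝ e) x := by
  have hsub : HasFDerivAt (fun z : E => z - y) (.id ℝ E) x := (hasFDerivAt_id x).sub_const y
  have hinner (v : E) : HasFDerivAt (fun z : E => inner ℝ v (z - y)) (innerSL ℝ v) x :=
    (innerSL ℝ v).hasFDerivAt.comp x hsub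
  refine (((hinner w).add (hsub.norm_sq.const_mul (δ / 2))).sub
    (((hinner e).pow 2).const_mul (k / 2))).congr_fderiv ?_
  ext v
  simp only [map_sub, ContinuousLinearMap.comp_id, Nat.add_one_sub_one, pow_one, nsmul_eq_mul,
    Nat.cast_ofNat, sub_apply, add_apply, coe_innerSL_apply, smul_apply, smul_eq_mul]
  ring

lemma fderiv_fderiv_saddleQuadratic_apply (w e y x v z : E) (k δ : ℝ) :
    fderiv ℝ (fderiv ℝ (saddleQuadratic w e y k δ)) x v z =
      δ * inner ℝ v z - k * (inner ℝ e v * inner ℝ e z) := by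
  have hfderiv : fderiv ℝ (saddleQuadratic w e y k δ) = fun x =>
      innerSL ℝ w + δ • innerSL ℝ (x - y) - k • (innerSL ℝ e).smulRight (innerSL ℝ e) (x - y) := by
    ext1 x
    simpa [smul_smul] using (hasFDerivAt_saddleQuadratic w e y x k δ).fderiv
  have hsub : HasFDerivAt (fun z : E => z - y) (.id ℝ E) x := (hasFDerivAt_id x).sub_const y
  have hfderiv₂ := ((((innerSL ℝ).hasFDerivAt.comp x hsub).const_smul δ).const_add
    (innerSL ℝ w)).sub
      ((((innerSL ℝ e).smulRight (innerSL ℝ e)).hasFDerivAt.comp x hsub).const_smul k)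
  rw [hfderiv]
  refine (congrArg (fun T => T v z) hfderiv₂.fderiv).trans ?_
  rfl

end SaddleQuadratic

section Eigenvalues

open Matrix

lemma hess_saddleQuadratic {n : ℕ} (w e y x : En n) (k δ : ℝ) :
    hess (saddleQuadratic w e y k δ) x = δ • 1 - k • vecMulVec (e : Fin n → ℝ) e := by
  ext i j
  rw [hess, iteratedFDeriv_two_apply]
  refine (fderiv_fderiv_saddleQuadratic_apply w e y x _ _ k δ).trans ?_
  simp [vecMulVec_apply, one_apply, EuclideanSpace.inner_single_right, eq_comm]

variable {ι : Type*}

lemma isHermitian_smul_one_sub_smul_vecMulVec [DecidableEq ι] (e : ι → ℝ) (k δ : ℝ) :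
    (δ • 1 - k • vecMulVec e e : Matrix ι ι ℝ).IsHermitian := by
  ext i j
  simp [vecMulVec_apply, one_apply, mul_comm, eq_comm]

variable [Fintype ι]

lemma dotProduct_self_eq_one {e : EuclideanSpace ℝ ι} (he : ‖e‖ = 1) :
    (e : ι → ℝ) ⬝ᵥ (e : ι → ℝ) = 1 := by
  have hinner : inner ℝ e e = (1 : ℝ) := by rw [real_inner_self_eq_norm_sq, he, one_pow]
  rwa [EuclideanSpace.inner_eq_star_dotProduct] at hinner

variable [DecidableEq ι]

lemma smul_one_sub_smul_vecMulVec_mulVec (e v : ι → ℝ) (k δ : ℝ) :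
    (δ • 1 - k • vecMulVec e e : Matrix ι ι ℝ) *ᵥ v = δ • v - (k * (e ⬝ᵥ v)) • e := by
  simp [sub_mulVec, smul_mulVec, vecMulVec_mulVec, smul_smul]

lemma eigenvalues_smul_one_sub_smul_vecMulVec (e : ι → ℝ) (k δ : ℝ)
    (hX : (δ • 1 - k • vecMulVec e e : Matrix ι ι ℝ).IsHermitian) (i : ι) :
    hX.eigenvalues i = δ - k * (e ⬝ᵥ ⇑(hX.eigenvectorBasis i)) ^ 2 := by
  have hunit : (⇑(hX.eigenvectorBasis i) : ι → ℝ) ⬝ᵥ ⇑(hX.eigenvectorBasis i) = 1 :=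
    dotProduct_self_eq_one (hX.eigenvectorBasis.orthonormal.1 i)
  rw [hX.eigenvalues_eq, smul_one_sub_smul_vecMulVec_mulVec]
  simp only [star_trivial, dotProduct_sub, dotProduct_smul, hunit, smul_eq_mul, RCLike.re_to_real,
    dotProduct_comm _ e]
  ring

lemma exists_eigenvalues_eq_of_mulVec_eq_smul {X : Matrix ι ι ℝ} (hX : X.IsHermitian) {v : ι → ℝ}
    (hv : v ≠ 0) {c : ℝ} (hXv : X *ᵥ v = c • v) : ∃ i, hX.eigenvalues i = c := by
  have hc : c ∈ spectrum ℝ X := by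
    rw [← spectrum_toLin', ← Module.End.hasEigenvalue_iff_mem_spectrum]
    exact Module.End.hasEigenvalue_of_hasEigenvector
      ⟨Module.End.mem_eigenspace_iff.2 (by rwa [toLin'_apply]), hv⟩
  rwa [hX.spectrum_real_eq_range_eigenvalues] at hc

lemma exists_eigenvalues_smul_one_sub_smul_vecMulVec_eq {e : ι → ℝ} (he : e ⬝ᵥ e = 1) (k δ : ℝ)
    (hX : (δ • 1 - k • vecMulVec e e : Matrix ι ι ℝ).IsHermitian) :
    ∃ i, hX.eigenvalues i = δ - k := by
  refine exists_eigenvalues_eq_of_mulVec_eq_smul hX (v := e) ?_ ?_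
  · rintro rfl
    simp at he
  · rw [smul_one_sub_smul_vecMulVec_mulVec, he, mul_one, sub_smul]

variable {n : ℕ} {X : Matrix (Fin n) (Fin n) ℝ}

lemma sortedEig_apply (hX : X.IsHermitian) (i : Fin n) :
    sortedEig X i = hX.eigenvalues (Tuple.sort hX.eigenvalues i) := by
  rw [sortedEig, dif_pos hX]

lemma exists_sortedEig_eq (hX : X.IsHermitian) (i : Fin n) :
    ∃ j, sortedEig X j = hX.eigenvalues i :=
  ⟨(Tuple.sort hX.eigenvalues).symm i, by rw [sortedEig_apply hX, Equiv.apply_symm_apply]⟩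

lemma monotone_sortedEig (X : Matrix (Fin n) (Fin n) ℝ) : Monotone (sortedEig X) := by
  unfold sortedEig
  split_ifs with hX
  · exact Tuple.monotone_sort hX.eigenvalues
  · exact monotone_const

variable {a : Fin n → ℝ}

lemma Ma_le_of_sortedEig_le (ha : ∀ i, 0 ≤ a i) {c k : ℝ} {j : Fin n}
    (hc : ∀ i, sortedEig X i ≤ c) (hj : sortedEig X j ≤ c - k) :
    Ma a X ≤ c * ∑ i, a i - k * a j := by
  have hle (i : Fin n) : sortedEig X i ≤ c - if i = j then k else 0 := by
    split_ifs with hij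
    · exact hij ▸ hj
    · simpa using hc i
  calc Ma a X ≤ ∑ i, a i * (c - if i = j then k else 0) :=
        Finset.sum_le_sum fun i _ => mul_le_mul_of_nonneg_left (hle i) (ha i)
    _ = c * ∑ i, a i - k * a j := by simp [mul_sub, Finset.mul_sum, mul_comm]

lemma le_Ma_of_le_sortedEig (ha : ∀ i, 0 ≤ a i) {c k : ℝ} {j : Fin n}
    (hc : ∀ i, c ≤ sortedEig X i) (hj : c + k ≤ sortedEig X j) :
    c * ∑ i, a i + k * a j ≤ Ma a X := by
  have hle (i : Fin n) : (c + if i = j then k else 0) ≤ sortedEig X i := by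
    split_ifs with hij
    · exact hij ▸ hj
    · simpa using hc i
  calc c * ∑ i, a i + k * a j = ∑ i, a i * (c + if i = j then k else 0) := by
        simp [mul_add, Finset.sum_add_distrib, Finset.mul_sum, mul_comm]
    _ ≤ Ma a X := Finset.sum_le_sum fun i _ => mul_le_mul_of_nonneg_left (hle i) (ha i)

variable [NeZero n]

lemma sortedEig_zero_le (hX : X.IsHermitian) (i : Fin n) : sortedEig X 0 ≤ hX.eigenvalues i := by
  obtain ⟨j, hj⟩ := exists_sortedEig_eq hX i
  exact hj ▸ monotone_sortedEig X (Fin.zero_le j)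

lemma le_sortedEig_lastIdx (hX : X.IsHermitian) (i : Fin n) :
    hX.eigenvalues i ≤ sortedEig X (lastIdx n) := by
  obtain ⟨j, hj⟩ := exists_sortedEig_eq hX i
  exact hj ▸ monotone_sortedEig X (Fin.le_def.2 (Nat.le_sub_one_of_lt j.isLt))

lemma Ma_hess_saddleQuadratic_le (ha : ∀ i, 0 ≤ a i) (w y x : En n) {e : En n} (he : ‖e‖ = 1)
    {k : ℝ} (hk : 0 ≤ k) (δ : ℝ) :
    Ma a (hess (saddleQuadratic w e y k δ) x) ≤ δ * ∑ i, a i - k * a 0 := by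
  rw [hess_saddleQuadratic]
  have hX := isHermitian_smul_one_sub_smul_vecMulVec (e : Fin n → ℝ) k δ
  obtain ⟨i, hi⟩ := exists_eigenvalues_smul_one_sub_smul_vecMulVec_eq (dotProduct_self_eq_one he)
    k δ hX
  refine Ma_le_of_sortedEig_le ha (fun j => ?_) ((sortedEig_zero_le hX i).trans_eq hi)
  rw [sortedEig_apply hX, eigenvalues_smul_one_sub_smul_vecMulVec]
  exact sub_le_self _ (by positivity)

lemma le_Ma_hess_saddleQuadratic (ha : ∀ i, 0 ≤ a i) (w y x : En n) {e : En n} (he : ‖e‖ = 1)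
    {k : ℝ} (hk : 0 ≤ k) (δ : ℝ) :
    δ * ∑ i, a i + k * a (lastIdx n) ≤ Ma a (hess (saddleQuadratic w e y (-k) δ) x) := by
  rw [hess_saddleQuadratic]
  have hX := isHermitian_smul_one_sub_smul_vecMulVec (e : Fin n → ℝ) (-k) δ
  obtain ⟨i, hi⟩ := exists_eigenvalues_smul_one_sub_smul_vecMulVec_eq (dotProduct_self_eq_one he)
    (-k) δ hX
  rw [sub_neg_eq_add] at hi
  refine le_Ma_of_le_sortedEig ha (fun j => ?_) (hi.symm.trans_le (le_sortedEig_lastIdx hX i))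
  rw [sortedEig_apply hX, eigenvalues_smul_one_sub_smul_vecMulVec, neg_mul, sub_neg_eq_add]
  exact le_add_of_nonneg_right (by positivity)

end Eigenvalues

section SaddleTest

variable {E : Type*} [NormedAddCommGroup E] [InnerProductSpace ℝ E]

/-- The inequality `α k ≤ g + S δ` at every interior local maximum of `u - φ`, where `φ` is a saddle
quadratic with Hessian `δ I - k e ⊗ e`. It retains from a viscosity inequality with right-hand side
`-g` exactly what the estimate needs, both for subsolutions and for negated supersolutions. -/
def SaddleTestBound (α S : ℝ) (Ω : Set E) (g u : E → ℝ) : Prop :=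
  ∀ x ∈ Ω, ∀ (w e y : E) (k δ : ℝ), ‖e‖ = 1 → 0 ≤ k →
    IsLocalMax (fun z => u z - saddleQuadratic w e y k δ z) x → α * k ≤ g x + S * δ

lemma SaddleTestBound.mono {α S : ℝ} {Ω Ω' : Set E} {g g' u : E → ℝ}
    (h : SaddleTestBound α S Ω g u) (hΩ : Ω' ⊆ Ω) (hg : ∀ x ∈ Ω', g x ≤ g' x) :
    SaddleTestBound α S Ω' g' u := fun x hx w e y k δ he hk hmax =>
  (h x (hΩ hx) w e y k δ he hk hmax).trans (add_le_add_left (hg x hx) _)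

variable {n : ℕ} [NeZero n] {a : Fin n → ℝ} {Ω : Set (En n)} {f u : En n → ℝ}

lemma IsViscSubsol.saddleTestBound (ha : ∀ i, 0 ≤ a i) (hu : IsViscSubsol a Ω f u) :
    SaddleTestBound (a 0) (∑ i, a i) Ω (fun x => max (-(f x)) 0) u := by
  intro x hx w e y k δ he hk hmax
  have hf := (hu x hx _ (contDiff_saddleQuadratic w e y k δ) (hmax.on Ω)).trans
    (Ma_hess_saddleQuadratic_le ha w y x he hk δ)
  linarith [le_max_left (-(f x)) 0]

lemma IsViscSupersol.saddleTestBound_neg (ha : ∀ i, 0 ≤ a i) (hu : IsViscSupersol a Ω f u) :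
    SaddleTestBound (a (lastIdx n)) (∑ i, a i) Ω (fun x => max (f x) 0) (fun x => -(u x)) := by
  intro x hx w e y k δ he hk hmax
  have hmin : IsLocalMin (fun z => u z - saddleQuadratic (-w) e y (-k) (-δ) z) x := by
    have heq : (fun z => u z - saddleQuadratic (-w) e y (-k) (-δ) z) =
        fun z => -(-(u z) - saddleQuadratic w e y k δ z) := by
      ext z
      rw [← neg_saddleQuadratic]
      ring
    exact heq ▸ hmax.neg
  have hf := (le_Ma_hess_saddleQuadratic ha (-w) y x he hk (-δ)).trans
    (hu x hx _ (contDiff_saddleQuadratic _ e y _ _) (hmin.on Ω))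
  linarith [le_max_left (f x) 0]

end SaddleTest

section SlopeOscillation

/-- `p` is the slope of an affine function that touches `u` from above at `y` among the points of
`s`. -/
def IsSupergradientOn {E : Type*} [NormedAddCommGroup E] [InnerProductSpace ℝ E] (u : E → ℝ)
    (s : Set E) (y p : E) : Prop :=
  ∀ z ∈ s, u z ≤ u y + inner ℝ p (z - y)

section Semicontinuous

variable {X : Type*} [TopologicalSpace X] {v ψ : X → ℝ} {s t : Set X} {z : X}

lemma upperSemicontinuousOn_sub_continuous (hv : UpperSemicontinuousOn v s) (hψ : Continuous ψ) :
    UpperSemicontinuousOn (fun x => v x - ψ x) s := by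
  simpa only [sub_eq_add_neg] using
    hv.add (g := fun x => -ψ x) (hψ.neg.upperSemicontinuous.upperSemicontinuousOn s)

lemma exists_mem_isLocalMax_of_upperSemicontinuousOn (ht : IsCompact t) (hst : s ⊆ t)
    (hv : UpperSemicontinuousOn v t) (hz : z ∈ t) (hvz : ∀ z' ∈ t \ s, v z' < v z)
    (hs : IsOpen s) : ∃ x ∈ s, IsLocalMax v x := by
  obtain ⟨x, hxt, hmax⟩ := hv.exists_isMaxOn ⟨z, hz⟩ ht
  have hxs : x ∈ s := by_contra fun hxs => (hvz x ⟨hxt, hxs⟩).not_ge (hmax hz)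
  exact ⟨x, hxs, hmax.isLocalMax (mem_of_superset (hs.mem_nhds hxs) hst)⟩

end Semicontinuous

variable {E : Type*} [NormedAddCommGroup E] [InnerProductSpace ℝ E]

lemma IsSupergradientOn.mono {u : E → ℝ} {s t : Set E} {y p : E} (h : IsSupergradientOn u t y p)
    (hst : s ⊆ t) : IsSupergradientOn u s y p := fun z hz => h z (hst hz)

lemma IsSupergradientOn.le_add_inner_add_inner {u : E → ℝ} {s : Set E} {y y' p p' x : E}
    (hp : IsSupergradientOn u s y p) (hp' : IsSupergradientOn u s y' p') (hy' : y' ∈ s)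
    (hx : x ∈ s) : u x ≤ u y + inner ℝ p (x - y) + inner ℝ (p' - p) (x - y') := by
  have hsum : inner ℝ p (y' - y) + inner ℝ p' (x - y') =
      inner ℝ p (x - y) + inner ℝ (p' - p) (x - y') := by
    simp only [inner_sub_left, inner_sub_right]
    ring
  linarith [hp y' hy', hp' x hx]

lemma saddleQuadratic_add_smul (p e y x : E) (k δ ρ : ℝ) :
    saddleQuadratic (p + (k * ρ) • e) e y k δ x =
      inner ℝ p (x - y) + δ / 2 * ‖x - y‖ ^ 2
        + k / 2 * (inner ℝ e (x - y) * (2 * ρ - inner ℝ e (x - y))) := by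
  simp only [saddleQuadratic, inner_add_left, real_inner_smul_left]
  ring

variable {u : E → ℝ} {s : Set E} {y y' p p' x e : E} {k δ ρ R : ℝ}

lemma inner_lt_saddleQuadratic_of_le_norm (hk : 0 ≤ k) (hδ : 0 < δ) (hR : 0 < R)
    (hρR : 8 * k * ρ ^ 2 < δ * R ^ 2) (ht₁ : -2 * ρ ≤ inner ℝ e (x - y))
    (ht₂ : inner ℝ e (x - y) ≤ 4 * ρ) (hx : R ≤ ‖x - y‖) :
    inner ℝ p (x - y) < saddleQuadratic (p + (k * ρ) • e) e y k δ x := by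
  rw [saddleQuadratic_add_smul]
  have hfactor : 0 ≤ k * ((inner ℝ e (x - y) + 2 * ρ) * (4 * ρ - inner ℝ e (x - y))) :=
    mul_nonneg hk (mul_nonneg (by linarith) (by linarith))
  have hnorm : δ * R ^ 2 ≤ δ * ‖x - y‖ ^ 2 := by gcongr
  linarith

lemma inner_lt_saddleQuadratic_of_inner_eq (hk : 0 ≤ k) (hδ : 0 < δ) (hρ : 0 < ρ)
    (ht : inner ℝ e (x - y) = ρ) :
    inner ℝ p (x - y) < saddleQuadratic (p + (k * ρ) • e) e y k δ x := by
  have hxy : 0 < ‖x - y‖ := by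
    rw [norm_pos_iff]
    intro h
    simp [h, hρ.ne] at ht
  rw [saddleQuadratic_add_smul, ht]
  have hpos : 0 < δ / 2 * ‖x - y‖ ^ 2 := by positivity
  have hnonneg : 0 ≤ k / 2 * (ρ * (2 * ρ - ρ)) := by
    rw [two_mul, add_sub_cancel_right]
    positivity
  linarith

lemma IsSupergradientOn.sub_saddleQuadratic_lt (hp : IsSupergradientOn u s y p)
    (hp' : IsSupergradientOn u s y' p') (hy' : y' ∈ s) (hx : x ∈ s) (hy'y : ‖y' - y‖ ≤ ρ)
    (he : ‖e‖ = 1) (hpp' : p' - p = ‖p' - p‖ • e) (hδ : 0 ≤ δ) (hρ : 0 < ρ)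
    (hslope : 4 * k * ρ < ‖p' - p‖) (ht : inner ℝ e (x - y) = -2 * ρ) :
    u x - saddleQuadratic (p + (k * ρ) • e) e y k δ x < u y := by
  have hy'e : -ρ ≤ inner ℝ e (y' - y) := by
    refine (neg_le_neg hy'y).trans (neg_le_of_abs_le ?_)
    simpa [he] using abs_real_inner_le_norm e (y' - y)
  have hxe : inner ℝ e (x - y') ≤ -ρ := by
    rw [← sub_sub_sub_cancel_right x y' y, inner_sub_right, ht]
    linarith
  have hdrop : inner ℝ (p' - p) (x - y') < -(4 * k * ρ) * ρ := by
    calc inner ℝ (p' - p) (x - y') = ‖p' - p‖ * inner ℝ e (x - y') := by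
          rw [hpp', real_inner_smul_left, norm_smul, he, norm_norm, mul_one]
      _ ≤ ‖p' - p‖ * -ρ := by gcongr
      _ < -(4 * k * ρ) * ρ := by
          rw [mul_neg, neg_mul]
          gcongr
  have hux := hp.le_add_inner_add_inner hp' hy' hx
  have hnorm : 0 ≤ δ / 2 * ‖x - y‖ ^ 2 := by positivity
  rw [saddleQuadratic_add_smul, ht]
  linarith

/-- If the slopes differed by more, the saddle quadratic with negative curvature `k` along
`p' - p` would touch `u` from above inside the slab `-2ρ ≤ ⟪e, x - y⟫ ≤ ρ`: the contact at `y'`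
makes `u` small on its left face, and the two quadratic terms handle the remaining boundary. -/
lemma SaddleTestBound.norm_sub_le_of_isSupergradientOn [FiniteDimensional ℝ E] {α S F : ℝ}
    (hT : SaddleTestBound α S (ball y R) (fun _ => F) u) (hu : UpperSemicontinuousOn u s)
    (hs : closedBall y R ⊆ s) (hp : IsSupergradientOn u s y p) (hp' : IsSupergradientOn u s y' p')
    (hy' : y' ∈ s) (hR : 0 < R) (hk : 0 ≤ k) (hδ : 0 < δ) (hρ : 0 < ρ)
    (hkF : F + S * δ < α * k) (hρR : 8 * k * ρ ^ 2 < δ * R ^ 2) (hy'y : ‖y' - y‖ ≤ ρ) :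
    ‖p' - p‖ ≤ 4 * k * ρ := by
  by_contra! hslope
  have hq : ‖p' - p‖ ≠ 0 := ((show 0 ≤ 4 * k * ρ by positivity).trans_lt hslope).ne'
  set e := ‖p' - p‖⁻¹ • (p' - p) with he_def
  have he : ‖e‖ = 1 := by rw [norm_smul, norm_inv, norm_norm, inv_mul_cancel₀ hq]
  have hpp' : p' - p = ‖p' - p‖ • e := by rw [he_def, smul_inv_smul₀ hq]
  set φ := saddleQuadratic (p + (k * ρ) • e) e y k δ
  have hφ : Continuous φ := (contDiff_saddleQuadratic (m := 0) _ _ _ _ _).continuous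
  have hφy : φ y = 0 := saddleQuadratic_self _ _ _ _ _
  have ht : Continuous fun x : E => inner ℝ e (x - y) := by fun_prop
  set O := ball y R ∩ (fun x => inner ℝ e (x - y)) ⁻¹' Ioo (-2 * ρ) ρ
  set Z := closedBall y R ∩ (fun x => inner ℝ e (x - y)) ⁻¹' Icc (-2 * ρ) ρ
  have hboundary : ∀ x ∈ Z \ O, u x - φ x < u y - φ y := by
    rintro x ⟨⟨hxR, htx⟩, hx⟩
    rw [hφy, sub_zero]
    rcases htx.1.eq_or_lt' with hleft | hleft
    · exact hp.sub_saddleQuadratic_lt hp' hy' (hs hxR) hy'y he hpp' hδ.le hρ hslope hleft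
    rw [sub_lt_iff_lt_add]
    refine (hp x (hs hxR)).trans_lt (add_lt_add_right ?_ _)
    rcases htx.2.eq_or_lt with hright | hright
    · exact inner_lt_saddleQuadratic_of_inner_eq hk hδ hρ hright
    · refine inner_lt_saddleQuadratic_of_le_norm hk hδ hR hρR htx.1 (by linarith [htx.2]) ?_
      rw [← dist_eq_norm]
      exact not_lt.1 fun hlt => hx ⟨hlt, hleft, hright⟩
  obtain ⟨x, hx, hmax⟩ := exists_mem_isLocalMax_of_upperSemicontinuousOn
    ((isCompact_closedBall y R).inter_right (isClosed_Icc.preimage ht))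
    (inter_subset_inter ball_subset_closedBall (preimage_mono Ioo_subset_Icc_self))
    (upperSemicontinuousOn_sub_continuous (hu.mono (inter_subset_left.trans hs)) hφ)
    ⟨mem_closedBall_self hR.le, by simp [hρ.le]⟩ hboundary
    (isOpen_ball.inter (isOpen_Ioo.preimage ht))
  exact (hT x hx.1 _ e y k δ he hk hmax).not_gt hkF

lemma exists_closedBall_subset_and_dist_lt {X Y : Type*} [PseudoMetricSpace X]
    [PseudoMetricSpace Y] {K Ω : Set X} {g : X → Y} (hK : IsCompact K) (hΩ : IsOpen Ω)
    (hKΩ : K ⊆ Ω) (hg : ContinuousOn g Ω) {ε : ℝ} (hε : 0 < ε) :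
    ∃ R > 0, ∀ b ∈ K, closedBall b R ⊆ Ω ∧ ∀ x ∈ closedBall b R, dist (g x) (g b) < ε := by
  obtain ⟨R₁, hR₁, hR₁Ω⟩ := hK.exists_cthickening_subset_open hΩ hKΩ
  obtain ⟨R₂, hR₂, hR₂g⟩ := Metric.mem_uniformity_dist.1 <|
    hK.uniformContinuousAt_of_continuousAt g
      (fun b hb => hg.continuousAt (hΩ.mem_nhds (hKΩ hb))) (Metric.dist_mem_uniformity hε)
  refine ⟨min R₁ (R₂ / 2), by positivity, fun b hb => ⟨?_, fun x hx => ?_⟩⟩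
  · exact ((closedBall_subset_closedBall (min_le_left _ _)).trans
      (closedBall_subset_cthickening hb R₁)).trans hR₁Ω
  · rw [dist_comm]
    refine hR₂g ?_ hb
    rw [dist_comm]
    linarith [mem_closedBall.1 hx, min_le_right R₁ (R₂ / 2)]

lemma SaddleTestBound.dist_le_of_isSupergradientOn [FiniteDimensional ℝ E] {α S F r : ℝ}
    {Ω : Set E} {g : E → ℝ} {b : E} (hT : SaddleTestBound α S Ω g u)
    (hu : UpperSemicontinuousOn u Ω) (hbΩ : closedBall b R ⊆ Ω)
    (hgF : ∀ z ∈ closedBall b R, g z ≤ F) (hk : 0 ≤ k) (hδ : 0 < δ) (hkF : F + S * δ < α * k)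
    (hr : 0 < r) (hrR : 10 * r ≤ R) (hkr : 320 * k * r < δ * R)
    (hy : y ∈ closedBall b (5 * r)) (hy' : y' ∈ closedBall b (5 * r))
    (hp : IsSupergradientOn u Ω y p) (hp' : IsSupergradientOn u Ω y' p') :
    dist p p' ≤ 40 * k * r := by
  have hR : 0 < R := by linarith
  have hyR : closedBall y (R / 2) ⊆ closedBall b R :=
    closedBall_subset_closedBall' (by linarith [mem_closedBall.1 hy])
  have hTy : SaddleTestBound α S (ball y (R / 2)) (fun _ => F) u :=
    hT.mono ((ball_subset_closedBall.trans hyR).trans hbΩ)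
      fun z hz => hgF z (hyR (ball_subset_closedBall hz))
  have hy'y : ‖y' - y‖ ≤ 10 * r := by
    rw [← dist_eq_norm]
    linarith [dist_triangle_right y' y b, mem_closedBall.1 hy, mem_closedBall.1 hy']
  have hkr' : 8 * k * (10 * r) ^ 2 < δ * (R / 2) ^ 2 := by
    have h₁ : 80 * k * r * (10 * r) ≤ 80 * k * r * R := by gcongr
    have h₂ : 320 * k * r * R < δ * R * R := by gcongr
    linarith
  calc dist p p' = ‖p' - p‖ := by rw [dist_comm, dist_eq_norm]
    _ ≤ 4 * k * (10 * r) := hTy.norm_sub_le_of_isSupergradientOn hu (hyR.trans hbΩ) hp hp'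
        (hbΩ (closedBall_subset_closedBall (by linarith) hy')) (by positivity) hk hδ (by positivity)
        hkF hkr' hy'y
    _ = 40 * k * r := by ring

lemma SaddleTestBound.exists_radius_dist_le [FiniteDimensional ℝ E] {α S ε : ℝ} {K Ω : Set E}
    {g : E → ℝ} (hT : SaddleTestBound α S Ω g u) (hα : 0 < α) (hΩ : IsOpen Ω) (hK : IsCompact K)
    (hKΩ : K ⊆ Ω) (hg : ContinuousOn g Ω) (hg₀ : ∀ x ∈ Ω, 0 ≤ g x)
    (hu : UpperSemicontinuousOn u Ω) (hε : 0 < ε) :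
    ∃ r > 0, ∀ b ∈ K, closedBall b r ⊆ Ω ∧ ∀ x ∈ closedBall b r,
      ∀ y ∈ closedBall b (5 * r), ∀ y' ∈ closedBall b (5 * r), ∀ p p',
        IsSupergradientOn u Ω y p → IsSupergradientOn u Ω y' p' →
          dist p p' ≤ 40 / α * (g x + ε) * r := by
  obtain ⟨R, hR, hRΩ⟩ := exists_closedBall_subset_and_dist_lt hK hΩ hKΩ hg
    (show 0 < ε / 4 by positivity)
  obtain ⟨B, hB⟩ := hK.exists_bound_of_continuousOn (hg.mono hKΩ)
  obtain ⟨δ, hδ, hSδ⟩ := exists_pos_mul_lt (show 0 < ε / 4 by positivity) S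
  obtain ⟨c, hc, hBc⟩ := exists_pos_mul_lt (show 0 < δ * R by positivity)
    (320 * ((B + 2 * ε) / α))
  refine ⟨min c (R / 10), by positivity, fun b hb => ?_⟩
  obtain ⟨hbΩ, hosc⟩ := hRΩ b hb
  have hrR : 10 * min c (R / 10) ≤ R := by linarith [min_le_right c (R / 10)]
  have hball : closedBall b (min c (R / 10)) ⊆ closedBall b R :=
    closedBall_subset_closedBall (by linarith)
  refine ⟨hball.trans hbΩ, fun x hx y hy y' hy' p p' hp hp' => ?_⟩
  have hgx := abs_lt.1 (hosc x (hball hx))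
  have hgx₀ := hg₀ x (hbΩ (hball hx))
  have hkr : 320 * ((g x + ε) / α) * min c (R / 10) < δ * R := by
    have hgB : g x + ε ≤ B + 2 * ε := by linarith [le_of_abs_le (hB b hb)]
    have hB₀ : 0 ≤ B + 2 * ε := by linarith
    refine lt_of_le_of_lt ?_ hBc
    gcongr
    exact min_le_left c (R / 10)
  refine (hT.dist_le_of_isSupergradientOn (F := g x + ε / 2) hu hbΩ (fun z hz => ?_)
    (by positivity) hδ ?_ (by positivity) hrR hkr hy hy' hp hp').trans_eq (by ring)
  · linarith [(abs_lt.1 (hosc z hz)).2]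
  · rw [mul_div_cancel₀ _ hα.ne']
    linarith

end SlopeOscillation

section Covering

open Module

variable {E : Type*} [NormedAddCommGroup E] [NormedSpace ℝ E] [FiniteDimensional ℝ E]
  [MeasurableSpace E] [BorelSpace E] (μ : Measure E) [μ.IsAddHaarMeasure]
  {A K Ω : Set E} {Y : E → E} {H : E → ℝ} {b : E} {r τ : ℝ}

lemma measure_le_setLIntegral_closedBall_of_dist_le (hr : 0 < r)
    (hA : ∀ x ∈ closedBall b r, ∀ p ∈ A, ∀ p' ∈ A, dist p p' ≤ H x * r) :
    μ A ≤ ∫⁻ x in closedBall b r, ‖H x‖ₑ ^ finrank ℝ E ∂μ := by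
  rcases A.eq_empty_or_nonempty with rfl | ⟨p, hp⟩
  · simp
  have hball₀ : μ (closedBall b r) ≠ 0 := (measure_closedBall_pos μ b hr).ne'
  have hball : μ (closedBall b r) ≠ ⊤ := measure_closedBall_lt_top.ne
  calc μ A = ∫⁻ _ in closedBall b r, μ A / μ (closedBall b r) ∂μ := by
        rw [setLIntegral_const, ENNReal.div_mul_cancel hball₀ hball]
    _ ≤ _ := setLIntegral_mono' measurableSet_closedBall fun x hx => ?_
  have hH : 0 ≤ H x := nonneg_of_mul_nonneg_left (dist_nonneg.trans (hA x hx p hp p hp)) hr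
  refine ENNReal.div_le_of_le_mul ?_
  calc μ A ≤ μ (closedBall p (H x * r)) := measure_mono fun p' hp' => hA x hx p' hp' p hp
    _ = ‖H x‖ₑ ^ finrank ℝ E * μ (closedBall b r) := by
        rw [Measure.addHaar_closedBall_mul μ p hH hr.le, Measure.addHaar_closedBall_center μ b r,
          Real.enorm_of_nonneg hH, ENNReal.ofReal_pow hH]

lemma measure_le_setLIntegral_of_dist_le (hr : 0 < r) (hτ : 3 < τ) (hYK : MapsTo Y A K)
    (hKΩ : ∀ b ∈ K, closedBall b r ⊆ Ω)
    (hY : ∀ b ∈ K, ∀ x ∈ closedBall b r, ∀ p ∈ A, Y p ∈ closedBall b (τ * r) →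
      ∀ p' ∈ A, Y p' ∈ closedBall b (τ * r) → dist p p' ≤ H x * r) :
    μ A ≤ ∫⁻ x in Ω, ‖H x‖ₑ ^ finrank ℝ E ∂μ := by
  obtain ⟨V, hVK, hVdisj, hVcover⟩ :=
    Vitali.exists_disjoint_subfamily_covering_enlargement_closedBall K id
      (fun _ => r) r (fun _ _ => le_rfl) τ hτ
  have hVcount : V.Countable := hVdisj.countable_of_nonempty_interior fun b _ =>
    ⟨b, ball_subset_interior_closedBall (mem_ball_self hr)⟩
  have hAcover : A ⊆ ⋃ b ∈ V, A ∩ Y ⁻¹' closedBall b (τ * r) := by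
    intro p hp
    obtain ⟨b, hbV, hb⟩ := hVcover (Y p) (hYK hp)
    exact mem_biUnion hbV ⟨hp, hb (mem_closedBall_self hr.le)⟩
  calc μ A ≤ ∑' b : V, μ (A ∩ Y ⁻¹' closedBall b (τ * r)) :=
        (measure_mono hAcover).trans (measure_biUnion_le μ hVcount _)
    _ ≤ ∑' b : V, ∫⁻ x in closedBall (b : E) r, ‖H x‖ₑ ^ finrank ℝ E ∂μ :=
        ENNReal.tsum_le_tsum fun b => measure_le_setLIntegral_closedBall_of_dist_le μ hr
          fun x hx p hp p' hp' => hY b (hVK b.2) x hx p hp.1 hp.2 p' hp'.1 hp'.2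
    _ = ∫⁻ x in ⋃ b ∈ V, closedBall b r, ‖H x‖ₑ ^ finrank ℝ E ∂μ :=
        (lintegral_biUnion hVcount (fun _ _ => measurableSet_closedBall) hVdisj _).symm
    _ ≤ ∫⁻ x in Ω, ‖H x‖ₑ ^ finrank ℝ E ∂μ :=
        lintegral_mono_set (iUnion₂_subset fun b hb => hKΩ b (hVK hb))

end Covering

section Contact

variable {E : Type*} [NormedAddCommGroup E] [InnerProductSpace ℝ E] {u : E → ℝ} {s Ω : Set E}
  {x y p : E}

lemma exists_isSupergradientOn (hs : IsCompact s) (hs₀ : s.Nonempty)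
    (hu : UpperSemicontinuousOn u s) (p : E) : ∃ y ∈ s, IsSupergradientOn u s y p := by
  obtain ⟨y, hy, hmax⟩ := (upperSemicontinuousOn_sub_continuous hu
    (ψ := fun x => inner ℝ p x) (by fun_prop)).exists_isMaxOn hs₀ hs
  refine ⟨y, hy, fun z hz => ?_⟩
  have hz' : u z - inner ℝ p z ≤ u y - inner ℝ p y := hmax hz
  rw [inner_sub_right]
  linarith

lemma IsSupergradientOn.le_add_norm_mul_diam (hp : IsSupergradientOn u s y p)
    (hs : Bornology.IsBounded s) (hy : y ∈ s) (hx : x ∈ s) : u x ≤ u y + ‖p‖ * diam s :=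
  calc u x ≤ u y + inner ℝ p (x - y) := hp x hx
    _ ≤ u y + ‖p‖ * ‖x - y‖ := by gcongr; exact real_inner_le_norm p (x - y)
    _ ≤ u y + ‖p‖ * diam s := by
        gcongr
        rw [← dist_eq_norm]
        exact dist_le_diam_of_mem hs hx hy

lemma exists_isCompact_subset_forall_exists_isSupergradientOn [ProperSpace E] (hΩ : IsOpen Ω)
    (hΩb : Bornology.IsBounded Ω) (hu : UpperSemicontinuousOn u (closure Ω)) {s₀ m : ℝ}
    (hs₀ : ∀ y ∈ frontier Ω, u y ≤ s₀) (hx : x ∈ Ω) (hm : s₀ < u x - m * diam Ω) :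
    ∃ K ⊆ Ω, IsCompact K ∧ ∀ p, ‖p‖ ≤ m → ∃ y ∈ K, IsSupergradientOn u Ω y p := by
  refine ⟨closure Ω ∩ u ⁻¹' Ici (u x - m * diam Ω), ?_,
    hu.isCompact_inter_preimage_Ici hΩb.isCompact_closure _, fun p hp => ?_⟩
  · rintro y ⟨hyΩ, hy⟩
    by_contra hy'
    have hyfr : y ∈ frontier Ω := by rw [hΩ.frontier_eq]; exact ⟨hyΩ, hy'⟩
    exact (hm.trans_le hy).not_ge (hs₀ y hyfr)
  · obtain ⟨y, hy, hyp⟩ :=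
      exists_isSupergradientOn hΩb.isCompact_closure ⟨x, subset_closure hx⟩ hu p
    have hxy : u x ≤ u y + m * diam Ω := by
      calc u x ≤ u y + ‖p‖ * diam (closure Ω) :=
            hyp.le_add_norm_mul_diam hΩb.closure hy (subset_closure hx)
        _ ≤ u y + m * diam Ω := by rw [diam_closure]; gcongr
    exact ⟨y, ⟨hy, sub_le_iff_le_add.2 hxy⟩, hyp.mono subset_closure⟩

end Contact

section MaximumPrinciple

open Module

variable {E : Type*} [NormedAddCommGroup E] [MeasurableSpace E] [BorelSpace E] (μ : Measure E)
  [μ.IsAddHaarMeasure]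

lemma mul_rpow_measureReal_ball_le_lpNorm_of_measure_closedBall_le [NormedSpace ℝ E]
    [FiniteDimensional ℝ E] [Nontrivial E] {X : Type*} [MeasurableSpace X] {ν : Measure X}
    {H : X → ℝ} (hH : MemLp H (finrank ℝ E) ν) {m : ℝ} (hm : 0 ≤ m)
    (h : μ (closedBall 0 m) ≤ ∫⁻ x, ‖H x‖ₑ ^ finrank ℝ E ∂ν) :
    m * μ.real (ball 0 1) ^ (finrank ℝ E : ℝ)⁻¹ ≤ lpNorm H (finrank ℝ E) ν := by
  have hn : finrank ℝ E ≠ 0 := finrank_pos.ne'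
  have hlint : ∫⁻ x, ‖H x‖ₑ ^ finrank ℝ E ∂ν =
      ENNReal.ofReal (lpNorm H (finrank ℝ E) ν ^ finrank ℝ E) := by
    rw [ENNReal.ofReal_pow lpNorm_nonneg, ofReal_lpNorm hH]
    simpa using (eLpNorm_nnreal_pow_eq_lintegral (f := H) (μ := ν) (p := finrank ℝ E)
      (by exact_mod_cast hn)).symm
  refine le_of_pow_le_pow_left₀ hn lpNorm_nonneg ?_
  calc (m * μ.real (ball 0 1) ^ (finrank ℝ E : ℝ)⁻¹) ^ finrank ℝ E
      = μ.real (closedBall 0 m) := by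
        rw [mul_pow, Real.rpow_inv_natCast_pow measureReal_nonneg hn,
          Measure.addHaar_real_closedBall μ 0 hm]
    _ ≤ lpNorm H (finrank ℝ E) ν ^ finrank ℝ E :=
        ENNReal.toReal_le_of_le_ofReal (pow_nonneg lpNorm_nonneg _) (h.trans_eq hlint)

variable [InnerProductSpace ℝ E] [FiniteDimensional ℝ E] {α S s₀ m : ℝ} {Ω : Set E} {g u : E → ℝ}
  {x : E}

lemma SaddleTestBound.measure_closedBall_le {ε : ℝ} (hT : SaddleTestBound α S Ω g u) (hα : 0 < α)
    (hΩ : IsOpen Ω) (hΩb : Bornology.IsBounded Ω) (hg : ContinuousOn g Ω)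
    (hg₀ : ∀ x ∈ Ω, 0 ≤ g x) (hu : UpperSemicontinuousOn u (closure Ω))
    (hs₀ : ∀ y ∈ frontier Ω, u y ≤ s₀) (hx : x ∈ Ω) (hm : s₀ < u x - m * diam Ω) (hε : 0 < ε) :
    μ (closedBall 0 m) ≤ ∫⁻ x in Ω, ‖40 / α * (g x + ε)‖ₑ ^ finrank ℝ E ∂μ := by
  obtain ⟨K, hKΩ, hK, hcontact⟩ :=
    exists_isCompact_subset_forall_exists_isSupergradientOn hΩ hΩb hu hs₀ hx hm
  choose! Y hYK hY using hcontact
  obtain ⟨r, hr, hslope⟩ :=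
    hT.exists_radius_dist_le hα hΩ hK hKΩ hg hg₀ (hu.mono subset_closure) hε
  refine measure_le_setLIntegral_of_dist_le μ (Y := Y) hr (show (3 : ℝ) < 5 by norm_num)
    (fun p hp => hYK p (mem_closedBall_zero_iff.1 hp)) (fun b hb => (hslope b hb).1)
    fun b hb x hx p hp hYp p' hp' hYp' => ?_
  exact (hslope b hb).2 x hx (Y p) hYp (Y p') hYp' p p' (hY p (mem_closedBall_zero_iff.1 hp))
    (hY p' (mem_closedBall_zero_iff.1 hp'))

variable [Nontrivial E]

lemma SaddleTestBound.mul_rpow_measureReal_ball_le_lpNorm (hT : SaddleTestBound α S Ω g u)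
    (hα : 0 < α) (hΩ : IsOpen Ω) (hΩb : Bornology.IsBounded Ω) (hg : ContinuousOn g Ω)
    (hg₀ : ∀ x ∈ Ω, 0 ≤ g x) (hgL : MemLp g (finrank ℝ E) (μ.restrict Ω))
    (hu : UpperSemicontinuousOn u (closure Ω)) (hs₀ : ∀ y ∈ frontier Ω, u y ≤ s₀) (hx : x ∈ Ω)
    (hm₀ : 0 ≤ m) (hm : s₀ < u x - m * diam Ω) :
    m * μ.real (ball 0 1) ^ (finrank ℝ E : ℝ)⁻¹ ≤
      40 / α * lpNorm g (finrank ℝ E) (μ.restrict Ω) := by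
  have : IsFiniteMeasure (μ.restrict Ω) := ⟨by simpa using hΩb.measure_lt_top⟩
  have hn : (1 : ENNReal) ≤ finrank ℝ E := by exact_mod_cast finrank_pos (R := ℝ) (M := E)
  set V := (μ.restrict Ω).real univ ^ (finrank ℝ E : ℝ)⁻¹
  refine le_of_forall_pos_le_add fun η hη => ?_
  obtain ⟨ε, hε, hεη⟩ := exists_pos_mul_lt hη (40 / α * V)
  have hgε : MemLp (g + fun _ => ε) (finrank ℝ E) (μ.restrict Ω) := hgL.add (memLp_const ε)
  calc m * μ.real (ball 0 1) ^ (finrank ℝ E : ℝ)⁻¹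
      ≤ lpNorm ((40 / α) • (g + fun _ => ε)) (finrank ℝ E) (μ.restrict Ω) :=
        mul_rpow_measureReal_ball_le_lpNorm_of_measure_closedBall_le μ (hgε.const_smul _) hm₀
          (hT.measure_closedBall_le μ hα hΩ hΩb hg hg₀ hu hs₀ hx hm hε)
    _ = 40 / α * lpNorm (g + fun _ => ε) (finrank ℝ E) (μ.restrict Ω) := by
        rw [lpNorm_const_smul, coe_nnnorm, Real.norm_of_nonneg (by positivity)]
    _ ≤ 40 / α * (lpNorm g (finrank ℝ E) (μ.restrict Ω) + ε * V) := by
        gcongr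
        refine (lpNorm_add_le hgL hn).trans_eq ?_
        rw [lpNorm_const' (by positivity) (ENNReal.natCast_ne_top _), Real.norm_of_nonneg hε.le,
          ENNReal.toReal_natCast]
    _ ≤ 40 / α * lpNorm g (finrank ℝ E) (μ.restrict Ω) + η := by linarith

theorem SaddleTestBound.le_add_mul_lpNorm (hT : SaddleTestBound α S Ω g u)
    (hα : 0 < α) (hΩ : IsOpen Ω) (hΩb : Bornology.IsBounded Ω) (hg : ContinuousOn g Ω)
    (hg₀ : ∀ x ∈ Ω, 0 ≤ g x) (hgL : MemLp g (finrank ℝ E) (μ.restrict Ω))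
    (hu : UpperSemicontinuousOn u (closure Ω)) (hs₀ : ∀ y ∈ frontier Ω, u y ≤ s₀) (hx : x ∈ Ω) :
    u x ≤ s₀ + 40 / μ.real (ball 0 1) ^ (finrank ℝ E : ℝ)⁻¹ / α * diam Ω *
      lpNorm g (finrank ℝ E) (μ.restrict Ω) := by
  have hball : 0 < μ.real (ball (0 : E) 1) :=
    ENNReal.toReal_pos (measure_ball_pos μ 0 one_pos).ne' measure_ball_lt_top.ne
  set ω := μ.real (ball (0 : E) 1) ^ (finrank ℝ E : ℝ)⁻¹
  have hω : 0 < ω := by positivity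
  set L := lpNorm g (finrank ℝ E) (μ.restrict Ω)
  have hL : 0 ≤ L := lpNorm_nonneg
  by_contra! hux
  obtain ⟨c, hc, hcd⟩ := exists_pos_mul_lt (sub_pos.2 hux) (diam Ω)
  have hm : s₀ < u x - (40 / ω / α * L + c) * diam Ω := by linarith
  have hslope := hT.mul_rpow_measureReal_ball_le_lpNorm μ hα hΩ hΩb hg hg₀ hgL hu hs₀ hx
    (by positivity) hm
  have hscale : 40 / ω / α * L * ω = 40 / α * L := by field_simp
  linarith [mul_pos hc hω]

lemma le_sSup_image_max_zero {X : Type*} [TopologicalSpace X] {s : Set X} {v : X → ℝ} {y : X}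
    (hs : IsCompact s) (hv : UpperSemicontinuousOn v s) (hy : y ∈ s) :
    v y ≤ sSup ((fun y => max (v y) 0) '' s) := by
  obtain ⟨B, hB⟩ := hv.bddAbove_of_isCompact hs
  refine (le_max_left _ 0).trans (le_csSup ⟨max B 0, ?_⟩ (mem_image_of_mem _ hy))
  rintro _ ⟨z, hz, rfl⟩
  exact max_le_max_right 0 (hB (mem_image_of_mem v hz))

theorem SaddleTestBound.max_zero_le_sSup_add_mul_lpNorm (hT : SaddleTestBound α S Ω g u)
    (hα : 0 < α) (hΩ : IsOpen Ω) (hΩb : Bornology.IsBounded Ω) (hg : ContinuousOn g Ω)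
    (hg₀ : ∀ x ∈ Ω, 0 ≤ g x) (hgL : MemLp g (finrank ℝ E) (μ.restrict Ω))
    (hu : UpperSemicontinuousOn u (closure Ω)) (hx : x ∈ Ω) :
    max (u x) 0 ≤ sSup ((fun y => max (u y) 0) '' frontier Ω) +
      40 / μ.real (ball 0 1) ^ (finrank ℝ E : ℝ)⁻¹ / α * diam Ω *
        lpNorm g (finrank ℝ E) (μ.restrict Ω) := by
  have hfr : IsCompact (frontier Ω) := hΩb.isCompact_closure.of_isClosed_subset isClosed_frontier
    frontier_subset_closure
  refine max_le (hT.le_add_mul_lpNorm μ hα hΩ hΩb hg hg₀ hgL hu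
    (fun y hy => le_sSup_image_max_zero hfr (hu.mono frontier_subset_closure) hy) hx) ?_
  have hsup : 0 ≤ sSup ((fun y => max (u y) 0) '' frontier Ω) :=
    Real.sSup_nonneg (by rintro _ ⟨y, -, rfl⟩; exact le_max_right _ _)
  have hnorm : 0 ≤ lpNorm g (finrank ℝ E) (μ.restrict Ω) := lpNorm_nonneg
  positivity

end MaximumPrinciple

section LpNormOn

variable {n : ℕ} {p : ℝ} {D : Set (En n)} {f g : En n → ℝ}

lemma lpNormOn_eq_lpNorm (hp : 0 < p) (hf : AEStronglyMeasurable f (volume.restrict D)) :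
    lpNormOn p D f = lpNorm f (ENNReal.ofReal p) (volume.restrict D) := by
  rw [lpNorm_eq_integral_norm_rpow_toReal (by simpa) ENNReal.ofReal_ne_top hf,
    ENNReal.toReal_ofReal hp.le, lpNormOn, one_div]
  rfl

lemma lpNormOn_mono (hp : 0 ≤ p) (hf : Integrable (fun x => |f x| ^ p) (volume.restrict D))
    (hgf : ∀ x, |g x| ≤ |f x|) : lpNormOn p D g ≤ lpNormOn p D f := by
  refine Real.rpow_le_rpow (integral_nonneg fun x => by positivity) ?_ (by positivity)
  refine integral_mono_of_nonneg (.of_forall fun x => by positivity) hf (.of_forall fun x => ?_)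
  exact Real.rpow_le_rpow (abs_nonneg _) (hgf x) hp

lemma memLp_restrict_of_continuousOn_of_bounded (hD : IsOpen D) (hDb : Bornology.IsBounded D)
    (hf : ContinuousOn f D) (hfb : ∃ K, ∀ x ∈ D, |f x| ≤ K) (q : ENNReal) :
    MemLp f q (volume.restrict D) := by
  have : IsFiniteMeasure (volume.restrict D) := ⟨by simpa using hDb.measure_lt_top⟩
  obtain ⟨K, hK⟩ := hfb
  exact MemLp.of_bound (hf.aestronglyMeasurable hD.measurableSet) K
    (ae_restrict_of_forall_mem hD.measurableSet hK)

end LpNormOn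

theorem abp_viscosity_general (n : ℕ) [NeZero n] :
    ∃ C : ℝ, 0 < C ∧
      ∀ (a : Fin n → ℝ) (Ω : Set (En n)), IsOpen Ω → Bornology.IsBounded Ω →
      ∀ f u : En n → ℝ, ContinuousOn f Ω →
        ((ClassA1 a → MemLp (fun x => max (-(f x)) 0) n (volume.restrict Ω) →
          UpperSemicontinuousOn u (closure Ω) → IsViscSubsol a Ω f u →
          ∀ x ∈ Ω,
            max (u x) 0 ≤ sSup ((fun y => max (u y) 0) '' frontier Ω) +
              (C / a 0) * Metric.diam Ω * lpNormOn (n : ℝ) Ω (fun x => max (-(f x)) 0)) ∧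
        (ClassAn a → MemLp (fun x => max (f x) 0) n (volume.restrict Ω) →
          LowerSemicontinuousOn u (closure Ω) → IsViscSupersol a Ω f u →
          ∀ x ∈ Ω,
            max (-(u x)) 0 ≤ sSup ((fun y => max (-(u y)) 0) '' frontier Ω) +
              (C / a (lastIdx n)) * Metric.diam Ω *
                lpNormOn (n : ℝ) Ω (fun x => max (f x) 0))) := by
  have hn : (0 : ℝ) < n := by exact_mod_cast NeZero.pos n
  have : Nontrivial (En n) :=
    Module.nontrivial_of_finrank_pos (R := ℝ) (by simpa using NeZero.pos n)
  have hball : 0 < volume.real (ball (0 : En n) 1) :=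
    ENNReal.toReal_pos (measure_ball_pos volume 0 one_pos).ne' measure_ball_lt_top.ne
  refine ⟨40 / volume.real (ball (0 : En n) 1) ^ (n : ℝ)⁻¹, by positivity,
    fun a Ω hΩ hΩb f u hf => ⟨fun ha hfL hu hsub x hx => ?_, fun ha hfL hu hsuper x hx => ?_⟩⟩
  · rw [lpNormOn_eq_lpNorm hn hfL.1, ENNReal.ofReal_natCast]
    simpa using (hsub.saddleTestBound ha.1).max_zero_le_sSup_add_mul_lpNorm volume ha.2 hΩ hΩb
      (hf.neg.sup continuousOn_const) (fun _ _ => le_max_right _ _) (by simpa using hfL) hu hx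
  · rw [lpNormOn_eq_lpNorm hn hfL.1, ENNReal.ofReal_natCast]
    simpa using (hsuper.saddleTestBound_neg ha.1).max_zero_le_sSup_add_mul_lpNorm volume ha.2 hΩ hΩb
      (hf.sup continuousOn_const) (fun _ _ => le_max_right _ _) (by simpa using hfL) hu.neg hx

/-- **Unilateral ABP estimates for viscosity solutions (Theorem 4.2).** There is `C_n > 0`
depending only on `n` such that, for `Ω ⊆ ℝⁿ` bounded open of diameter `d` and `f`
continuous and bounded: (i) if `M_a ∈ 𝒜₁` and `u` is an usc viscosity subsolution of
`M_a(D²u) = f` in `Ω`, then `sup_Ω u⁺ ≤ sup_{∂Ω} u⁺ + (C_n/a₁) d ‖f‖_{L^n(Ω)}`;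
(ii) if `M_a ∈ 𝒜ₙ` and `u` is a lsc viscosity supersolution, then
`sup_Ω u⁻ ≤ sup_{∂Ω} u⁻ + (C_n/aₙ) d ‖f‖_{L^n(Ω)}`. -/
theorem abp_viscosity (n : ℕ) [NeZero n] :
    ∃ C : ℝ, 0 < C ∧
      ∀ (a : Fin n → ℝ) (Ω : Set (En n)), IsOpen Ω → Bornology.IsBounded Ω →
      ∀ f u : En n → ℝ,
        ContinuousOn f Ω → (∃ K, ∀ x ∈ Ω, |f x| ≤ K) →
        ((ClassA1 a → UpperSemicontinuousOn u (closure Ω) → IsViscSubsol a Ω f u →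
          ∀ x ∈ Ω,
            max (u x) 0 ≤ sSup ((fun y => max (u y) 0) '' frontier Ω) +
              (C / a 0) * Metric.diam Ω * lpNormOn (n : ℝ) Ω f) ∧
        (ClassAn a → LowerSemicontinuousOn u (closure Ω) → IsViscSupersol a Ω f u →
          ∀ x ∈ Ω,
            max (-(u x)) 0 ≤ sSup ((fun y => max (-(u y)) 0) '' frontier Ω) +
              (C / a (lastIdx n)) * Metric.diam Ω * lpNormOn (n : ℝ) Ω f)) := by
  obtain ⟨C, hC, h⟩ := abp_viscosity_general n
  refine ⟨C, hC, fun a Ω hΩ hΩb f u hf hfb => ?_⟩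
  have hfL : MemLp f n (volume.restrict Ω) :=
    memLp_restrict_of_continuousOn_of_bounded hΩ hΩb hf hfb n
  have hint : Integrable (fun x => |f x| ^ (n : ℝ)) (volume.restrict Ω) := by
    simpa using hfL.integrable_norm_rpow (by simpa using NeZero.ne n) (ENNReal.natCast_ne_top n)
  refine ⟨fun ha hu hsub x hx => ?_, fun ha hu hsuper x hx => ?_⟩
  · refine ((h a Ω hΩ hΩb f u hf).1 ha hfL.neg_part hu hsub x hx).trans ?_
    have := ha.2
    gcongr
    exact lpNormOn_mono n.cast_nonneg hint fun x => by grind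
  · refine ((h a Ω hΩ hΩb f u hf).2 ha hfL.pos_part hu hsuper x hx).trans ?_
    have := ha.2
    gcongr
    exact lpNormOn_mono n.cast_nonneg hint fun x => by grind
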